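/- Let B be a bivector in ℝ_{p,q,r} with effective dimension 2k and effective pseudoscalar W_k, let v₊ and v₋ be eigenvectors of B with eigenvalues +μ and −μ (μ ≠ 0) such that v₊ · v₋ ≠ 0, and set β_μ := (v₊ ∧ v₋)/(v₊ · v₋). Then: (i) β_μ² = 1; (ii) β_μ × v_± = ± v_±, i.e. v₊ and v₋ are eigenvectors of β_μ with eigenvalues ±1; and (iii) W_k β_μ = β_μ W_k and this product is homogeneous of grade 2k − 2. -/

import Mathlib

/-! Common setup: the real geometric algebra `ℝ_{p,q,r}`, grade projections `⟨·⟩_ℓ`,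
the commutator product `×`, the wedge powers `W_j`, the outer exponential and outer
trigonometric functions, the characteristic polynomial data `M_μ`, and the
complexification `ℂ ⊗ ℝ_{p,q,r}`. -/

noncomputable section

open CliffordAlgebra TensorProduct

/-- The diagonal quadratic form of signature `(p,q,r)` on `ℝⁿ`, `n = p+q+r`:
`p` basis vectors of square `+1`, `q` of square `-1`, `r` of square `0`.
`ℝ_{p,q,r} := CliffordAlgebra (sigQ p q r)`. -/
def sigQ (p q r : ℕ) : QuadraticForm ℝ (Fin (p + q + r) → ℝ) :=
  QuadraticMap.weightedSumSquares ℝ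
    (fun i : Fin (p + q + r) => if (i : ℕ) < p then (1 : ℝ) else if (i : ℕ) < p + q then -1 else 0)

variable {K : Type*} [Field K] [CharZero K] {M : Type*} [AddCommGroup M] [Module K M]

/-- The grade-`ℓ` component `⟨x⟩_ℓ` of an element of a Clifford algebra, obtained by
transporting the grading of the exterior algebra along `CliffordAlgebra.equivExterior`. -/
def gradeProj (Q : QuadraticForm K M) (ℓ : ℕ) (x : CliffordAlgebra Q) : CliffordAlgebra Q :=
  letI : Invertible (2 : K) := invertibleOfNonzero two_ne_zero
  (equivExterior Q).symm
    (DirectSum.decompose (fun n : ℕ => ⋀[K]^n M) (equivExterior Q x) ℓ : ExteriorAlgebra K M)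

/-- `x` is homogeneous of grade `ℓ`; in particular `IsGrade Q 2 B` says `B` is a bivector. -/
def IsGrade (Q : QuadraticForm K M) (ℓ : ℕ) (x : CliffordAlgebra Q) : Prop :=
  gradeProj Q ℓ x = x

/-- The commutator product `x × y := (xy - yx)/2`. -/
def cprod {Q : QuadraticForm K M} (x y : CliffordAlgebra Q) : CliffordAlgebra Q :=
  (2 : K)⁻¹ • (x * y - y * x)

/-- `W_j := (1/j!) ⟨B^j⟩_{2j}`, the normalized `j`-fold wedge power of `B`. -/
def Wj (Q : QuadraticForm K M) (B : CliffordAlgebra Q) (j : ℕ) : CliffordAlgebra Q :=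
  ((j.factorial : K)⁻¹) • gradeProj Q (2 * j) (B ^ j)

/-- `B` has effective dimension `2k`: `k` is the largest integer with `W_k ≠ 0`. -/
def HasEffDim (Q : QuadraticForm K M) (B : CliffordAlgebra Q) (k : ℕ) : Prop :=
  Wj Q B k ≠ 0 ∧ ∀ j, k < j → Wj Q B j = 0

/-- The outer exponential `Λ^B = Σ_{j≥0} W_j`; `n` is any bound beyond which all the `W_j`
vanish (e.g. the dimension of the underlying space), so the sum is complete. -/
def outerExp (Q : QuadraticForm K M) (n : ℕ) (B : CliffordAlgebra Q) : CliffordAlgebra Q :=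
  ∑ j ∈ Finset.range (n + 1), Wj Q B j

/-- The outer cosine `co∧(B) := (Λ^B + Λ^{-B})/2`. -/
def coW (Q : QuadraticForm K M) (n : ℕ) (B : CliffordAlgebra Q) : CliffordAlgebra Q :=
  (2 : K)⁻¹ • (outerExp Q n B + outerExp Q n (-B))

/-- The outer sine `si∧(B) := (Λ^B - Λ^{-B})/2`. -/
def siW (Q : QuadraticForm K M) (n : ℕ) (B : CliffordAlgebra Q) : CliffordAlgebra Q :=
  (2 : K)⁻¹ • (outerExp Q n B - outerExp Q n (-B))

/-- `M_μ := Σ_{j=0}^k (-μ)^{k-j} W_j`; the characteristic polynomial of `B` is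
`P_{2k}(μ) = M_μ * reverse M_μ`. -/
def Mpoly (Q : QuadraticForm K M) (B : CliffordAlgebra Q) (k : ℕ) (μ : K) : CliffordAlgebra Q :=
  ∑ j ∈ Finset.range (k + 1), (-μ) ^ (k - j) • Wj Q B j

/-- The wedge (outer) product, `X ∧ Y := ⟨XY⟩_{i+j}` on homogeneous elements of grades `i`, `j`,
extended bilinearly; `n` bounds the occurring grades. -/
def wedgeProd (Q : QuadraticForm K M) (n : ℕ) (x y : CliffordAlgebra Q) : CliffordAlgebra Q :=
  ∑ i ∈ Finset.range (n + 1), ∑ j ∈ Finset.range (n + 1),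
    gradeProj Q (i + j) (gradeProj Q i x * gradeProj Q j y)

/-- The dot product of two vectors, `u · v = ⟨uv⟩₀ = polar(Q)(u,v)/2`, as a scalar. -/
def vdot (Q : QuadraticForm K M) (u v : M) : K := (2 : K)⁻¹ * QuadraticMap.polar Q u v

/-- The complexified quadratic form of signature `(p,q,r)`. -/
def sigQc (p q r : ℕ) : QuadraticForm ℂ (ℂ ⊗[ℝ] (Fin (p + q + r) → ℝ)) :=
  letI : Invertible (2 : ℝ) := invertibleOfNonzero two_ne_zero
  (sigQ p q r).baseChange ℂ

/-- The canonical embedding of `ℝ_{p,q,r}` into its complexification `ℂ ⊗ ℝ_{p,q,r}`. -/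
def toC (p q r : ℕ) (x : CliffordAlgebra (sigQ p q r)) : CliffordAlgebra (sigQc p q r) :=
  letI : Invertible (2 : ℝ) := invertibleOfNonzero two_ne_zero
  ofBaseChange ℂ (sigQ p q r) ((1 : ℂ) ⊗ₜ x)

/-- `v` is an eigenvector of the bivector `B` with eigenvalue `μ`: `v ≠ 0` and `B × v = μ v`. -/
def IsEigen (Q : QuadraticForm K M) (B : CliffordAlgebra Q) (μ : K) (v : M) : Prop :=
  v ≠ 0 ∧ cprod B (ι Q v) = μ • ι Q v

end

/-! Let `v` be an eigenvector of the bivector `B` with eigenvalue `μ ≠ 0`. By the Leibniz rule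
`B ^ (k + 1) × v = (k + 1) μ v B ^ k` up to terms of degree at most `2 * k`. On the other hand
`B ^ (k + 1)` is even, so `B ^ (k + 1) × v = -v ⌋ B ^ (k + 1)`, whose component of grade `2 * k + 1`
is a contraction of `W_{k+1} = 0`. Hence `v ∧ W_k = 0`, that is, `v W_k = v ⌋ W_k`; as `W_k` is
even, `v` anticommutes with it.

Applied to `v₊` and `v₋`, this shows that `v₊ v₋`, and so `β_μ = v₊ v₋ / (v₊ · v₋) - 1`, commutes
with `W_k`, and that `β_μ W_k = v₊ ⌋ (v₋ ⌋ W_k) / (v₊ · v₋)` has grade `2 * k - 2`. Since `v₊` and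
`v₋` are null, `β_μ v₊ = v₊ = -v₊ β_μ`, from which `β_μ ^ 2 = 1` and the eigenvector relations
follow. -/

noncomputable section

open CliffordAlgebra TensorProduct

section CommRing

variable {R : Type*} [CommRing R] {M : Type*} [AddCommGroup M] [Module R M]
  {Q : QuadraticForm R M}

theorem involute_contractLeft (d : Module.Dual R M) (x : CliffordAlgebra Q) :
    involute (contractLeft d x) = -contractLeft d (involute x) := by
  induction x using CliffordAlgebra.left_induction with
  | algebraMap r => simp
  | add x y hx hy => rw [map_add, map_add, hx, hy, map_add, map_add, neg_add]
  | ι_mul x v hx =>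
    simp only [contractLeft_ι_mul, map_sub, map_smul, map_mul, involute_ι, hx, neg_mul, map_neg,
      mul_neg]
    abel

variable (R M) in
/-- The projection of the exterior algebra onto its degree-`l` part, as a linear map; `gradeProj`
is its transport along `toExterior`. -/
def exteriorProj (l : ℕ) : ExteriorAlgebra R M →ₗ[R] ExteriorAlgebra R M :=
  GradedAlgebra.proj (fun n : ℕ => ⋀[R]^n M) l

theorem exteriorProj_algebraMap (l : ℕ) (r : R) :
    exteriorProj R M l (algebraMap R _ r) = if l = 0 then algebraMap R _ r else 0 := by
  have h_scalar : algebraMap R (ExteriorAlgebra R M) r ∈ ⋀[R]^0 M :=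
    SetLike.algebraMap_mem_graded (fun n : ℕ => ⋀[R]^n M) r
  split_ifs with hl
  · subst hl
    exact DirectSum.decompose_of_mem_same (fun n : ℕ => ⋀[R]^n M) h_scalar
  · exact DirectSum.decompose_of_mem_ne (fun n : ℕ => ⋀[R]^n M) h_scalar (Ne.symm hl)

theorem ι_mem_exteriorPower_one (v : M) : ExteriorAlgebra.ι R v ∈ ⋀[R]^1 M := by
  rw [ExteriorAlgebra.exteriorPower, pow_one]
  exact LinearMap.mem_range_self _ v

theorem exteriorProj_zero_ι_mul (v : M) (x : ExteriorAlgebra R M) :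
    exteriorProj R M 0 (ExteriorAlgebra.ι R v * x) = 0 :=
  DirectSum.coe_decompose_mul_of_left_mem_of_not_le (fun n : ℕ => ⋀[R]^n M)
    (ι_mem_exteriorPower_one v) (by decide)

theorem exteriorProj_succ_ι_mul (l : ℕ) (v : M) (x : ExteriorAlgebra R M) :
    exteriorProj R M (l + 1) (ExteriorAlgebra.ι R v * x) =
      ExteriorAlgebra.ι R v * exteriorProj R M l x := by
  rw [add_comm l 1]
  exact DirectSum.coe_decompose_mul_add_of_left_mem (fun n : ℕ => ⋀[R]^n M)
    (ι_mem_exteriorPower_one v)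

theorem contractLeft_exteriorProj_zero (d : Module.Dual R M) (x : ExteriorAlgebra R M) :
    contractLeft (Q := 0) d (exteriorProj R M 0 x) = 0 := by
  have h_scalar : exteriorProj R M 0 x ∈ ⋀[R]^0 M := SetLike.coe_mem _
  rw [ExteriorAlgebra.exteriorPower, pow_zero] at h_scalar
  obtain ⟨r, hr⟩ := Submodule.mem_one.1 h_scalar
  rw [← hr]
  exact contractLeft_algebraMap (0 : QuadraticForm R M) d r

theorem exteriorProj_contractLeft (l : ℕ) (d : Module.Dual R M) (x : ExteriorAlgebra R M) :
    exteriorProj R M l (contractLeft (Q := 0) d x) =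
      contractLeft (Q := 0) d (exteriorProj R M (l + 1) x) := by
  induction x using CliffordAlgebra.left_induction generalizing l with
  | algebraMap r =>
    refine (congrArg _ (contractLeft_algebraMap (0 : QuadraticForm R M) d r)).trans ?_
    rw [map_zero]
    refine Eq.trans ?_ (congrArg _ (exteriorProj_algebraMap (l + 1) r).symm)
    rw [if_neg l.succ_ne_zero, map_zero]
  | add x y hx hy => simp only [map_add, hx, hy]
  | ι_mul x v hx =>
    rw [contractLeft_ι_mul, map_sub, map_smul, exteriorProj_succ_ι_mul, contractLeft_ι_mul]
    cases l with
    | zero => rw [exteriorProj_zero_ι_mul, contractLeft_exteriorProj_zero, mul_zero]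
    | succ l => rw [exteriorProj_succ_ι_mul, hx]

/-- The degree filtration of the Clifford algebra: the span of all products of at most `n`
vectors. -/
def degreeLE (Q : QuadraticForm R M) (n : ℕ) : Submodule R (CliffordAlgebra Q) :=
  (1 ⊔ LinearMap.range (ι Q)) ^ n

theorem degreeLE_mono {m n : ℕ} (h : m ≤ n) : degreeLE Q m ≤ degreeLE Q n :=
  pow_le_pow_right₀ le_sup_left h

theorem mul_mem_degreeLE {m n : ℕ} {x y : CliffordAlgebra Q} (hx : x ∈ degreeLE Q m)
    (hy : y ∈ degreeLE Q n) : x * y ∈ degreeLE Q (m + n) := by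
  rw [degreeLE, pow_add]
  exact Submodule.mul_mem_mul hx hy

theorem ι_mem_degreeLE (v : M) : ι Q v ∈ degreeLE Q 1 := by
  rw [degreeLE, pow_one]
  exact Submodule.mem_sup_right (LinearMap.mem_range_self _ v)

theorem algebraMap_mem_degreeLE (n : ℕ) (r : R) :
    algebraMap R (CliffordAlgebra Q) r ∈ degreeLE Q n := by
  refine degreeLE_mono n.zero_le ?_
  rw [degreeLE, pow_zero]
  exact Submodule.algebraMap_mem r

theorem pow_mem_degreeLE {n : ℕ} {x : CliffordAlgebra Q} (hx : x ∈ degreeLE Q n) (j : ℕ) :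
    x ^ j ∈ degreeLE Q (n * j) := by
  rw [degreeLE, pow_mul]
  exact Submodule.pow_mem_pow _ hx j

theorem contractLeft_mem_degreeLE (d : Module.Dual R M) {n : ℕ} {x : CliffordAlgebra Q}
    (hx : x ∈ degreeLE Q n) : contractLeft d x ∈ degreeLE Q n := by
  induction hx using Submodule.pow_induction_on_left' with
  | algebraMap r => rw [contractLeft_algebraMap]; exact zero_mem _
  | add x y n _ _ hx hy => rw [map_add]; exact add_mem hx hy
  | mem_mul m hm n x hx hdx =>
    obtain ⟨_, hr, _, ⟨v, rfl⟩, rfl⟩ := Submodule.mem_sup.1 hm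
    obtain ⟨r, rfl⟩ := Submodule.mem_one.1 hr
    have h_succ : degreeLE Q n ≤ degreeLE Q (n + 1) := degreeLE_mono n.le_succ
    have h_ι_mul : ι Q v * contractLeft d x ∈ degreeLE Q (n + 1) :=
      add_comm n 1 ▸ mul_mem_degreeLE (ι_mem_degreeLE v) hdx
    rw [add_mul, ← Algebra.smul_def, map_add, map_smul, contractLeft_ι_mul]
    exact add_mem (Submodule.smul_mem _ r (h_succ hdx))
      (sub_mem (Submodule.smul_mem _ (d v) (h_succ hx)) h_ι_mul)

theorem ofBaseChange_one_tmul (A : Type*) [CommRing A] [Algebra R A] [Invertible (2 : R)]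
    (x : CliffordAlgebra Q) : ofBaseChange A Q (1 ⊗ₜ x) = ofBaseChangeAux A Q x :=
  (Algebra.TensorProduct.lift_tmul _ _ _ _ _).trans (by rw [map_one, one_mul])

end CommRing

variable {K : Type*} [Field K] {M : Type*} [AddCommGroup M] [Module K M]
  {Q : QuadraticForm K M}

/-- The linear form `v · _` on vectors. -/
def vdotDual (Q : QuadraticForm K M) (v : M) : Module.Dual K M :=
  (2 : K)⁻¹ • QuadraticMap.polarBilin Q v

theorem vdotDual_apply (v w : M) : vdotDual Q v w = vdot Q v w := by
  simp [vdotDual, vdot]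

theorem vdot_comm (v w : M) : vdot Q v w = vdot Q w v := by
  rw [vdot, vdot, QuadraticMap.polar_comm]

theorem cprod_mul_left (x y z : CliffordAlgebra Q) :
    cprod (x * y) z = x * cprod y z + cprod x z * y := by
  simp only [cprod, mul_smul_comm, smul_mul_assoc, ← smul_add]
  congr 1
  noncomm_ring

section BaseChange

variable (A : Type*) [Field A] [Algebra K A] [Invertible (2 : K)]

theorem vdot_baseChange (v w : M) :
    vdot (Q.baseChange A) (1 ⊗ₜ v) (1 ⊗ₜ w) = algebraMap K A (vdot Q v w) := by
  simp only [vdot, QuadraticMap.polar, ← tmul_add, QuadraticForm.baseChange_tmul,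
    Algebra.smul_def, mul_one, map_mul, map_inv₀, map_ofNat, map_sub]

theorem ofBaseChangeAux_contractLeft (v : M) (x : CliffordAlgebra Q) :
    ofBaseChangeAux A Q (contractLeft (vdotDual Q v) x) =
      contractLeft (vdotDual (Q.baseChange A) (1 ⊗ₜ v)) (ofBaseChangeAux A Q x) := by
  induction x using CliffordAlgebra.left_induction with
  | algebraMap r =>
    rw [contractLeft_algebraMap, map_zero, AlgHom.commutes, IsScalarTower.algebraMap_apply K A,
      contractLeft_algebraMap]
  | add x y hx hy => simp only [map_add, hx, hy]
  | ι_mul x w hx =>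
    rw [contractLeft_ι_mul, map_sub, map_smul, map_mul, map_mul, hx, ofBaseChangeAux_ι,
      contractLeft_ι_mul, vdotDual_apply, vdotDual_apply, vdot_baseChange, algebraMap_smul]

end BaseChange

section TwoNeZero

variable [NeZero (2 : K)]

theorem ι_mul_ι_add_swap_eq_vdot (v w : M) :
    ι Q v * ι Q w + ι Q w * ι Q v = algebraMap K _ (2 * vdot Q v w) := by
  rw [ι_mul_ι_add_swap, vdot, mul_inv_cancel_left₀ two_ne_zero]

theorem ι_mul_sub_involute_mul_ι (v : M) (x : CliffordAlgebra Q) :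
    ι Q v * x - involute x * ι Q v = (2 : K) • contractLeft (vdotDual Q v) x := by
  induction x using CliffordAlgebra.left_induction with
  | algebraMap r =>
    rw [AlgHom.commutes, contractLeft_algebraMap, smul_zero, ← Algebra.commutes, sub_self]
  | add x y hx hy =>
    rw [map_add, map_add, smul_add, ← hx, ← hy, mul_add, add_mul]
    abel
  | ι_mul x w hx =>
    rw [contractLeft_ι_mul, map_mul, involute_ι, smul_sub, ← mul_smul_comm, ← hx, vdotDual_apply,
      smul_smul, Algebra.smul_def, ← ι_mul_ι_add_swap_eq_vdot]
    noncomm_ring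

theorem mul_eq_mul_add_two_smul_cprod (x y : CliffordAlgebra Q) :
    x * y = y * x + (2 : K) • cprod x y := by
  rw [cprod, smul_inv_smul₀ two_ne_zero, add_sub_cancel]

theorem cprod_ι_of_involute_eq {x : CliffordAlgebra Q} (hx : involute x = x) (v : M) :
    cprod x (ι Q v) = -contractLeft (vdotDual Q v) x := by
  rw [cprod, inv_smul_eq_iff₀ two_ne_zero, smul_neg, ← ι_mul_sub_involute_mul_ι, hx, neg_sub]

theorem ι_mul_eq_neg_mul_ι {v : M} {x : CliffordAlgebra Q} (hx : involute x = x)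
    (hv : ι Q v * x = contractLeft (vdotDual Q v) x) : ι Q v * x = -(x * ι Q v) := by
  have h_comm := ι_mul_sub_involute_mul_ι v x
  rw [hx, ← hv, two_smul, sub_eq_iff_eq_add, add_assoc, left_eq_add] at h_comm
  exact eq_neg_of_add_eq_zero_left h_comm

variable {B : CliffordAlgebra Q} {μ : K} {v : M}

theorem IsEigen.ι_mul_self (hv : IsEigen Q B μ v) (hμ : μ ≠ 0) : ι Q v * ι Q v = 0 := by
  have h_comm : B * ι Q v = ι Q v * B + (2 * μ) • ι Q v := by
    rw [mul_eq_mul_add_two_smul_cprod, hv.2, smul_smul]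
  have h_sq : B * (ι Q v * ι Q v) = ι Q v * ι Q v * B + (2 * (2 * μ)) • (ι Q v * ι Q v) := by
    rw [← mul_assoc, h_comm, add_mul, mul_assoc (ι Q v) B, h_comm, mul_add, ← mul_assoc,
      mul_smul_comm, smul_mul_assoc]
    module
  have h_scalar : B * (ι Q v * ι Q v) = ι Q v * ι Q v * B := by
    rw [ι_sq_scalar, Algebra.commutes]
  have h_zero : (2 * (2 * μ)) • (ι Q v * ι Q v) = 0 := add_eq_left.1 (h_sq.symm.trans h_scalar)
  exact (smul_eq_zero.1 h_zero).resolve_left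
    (mul_ne_zero two_ne_zero (mul_ne_zero two_ne_zero hμ))

theorem IsEigen.cprod_pow_succ_sub_mem_degreeLE (hv : IsEigen Q B μ v) (hB : B ∈ degreeLE Q 2)
    (j : ℕ) :
    cprod (B ^ (j + 1)) (ι Q v) - ((j + 1 : K) * μ) • (ι Q v * B ^ j) ∈ degreeLE Q (2 * j) := by
  induction j with
  | zero =>
    rw [zero_add, pow_one, hv.2, pow_zero, mul_one, Nat.cast_zero, zero_add, one_mul, sub_self]
    exact zero_mem _
  | succ j ih =>
    have h_ι_mul : ι Q v * B ^ j ∈ degreeLE Q (1 + 2 * j) :=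
      mul_mem_degreeLE (ι_mem_degreeLE v) (pow_mem_degreeLE hB j)
    have h_cprod : cprod (B ^ (j + 1)) (ι Q v) ∈ degreeLE Q (2 * j + 2) := by
      rw [← sub_add_cancel (cprod (B ^ (j + 1)) (ι Q v)) (((j + 1 : K) * μ) • (ι Q v * B ^ j))]
      exact add_mem (degreeLE_mono (by omega) ih)
        (Submodule.smul_mem _ _ (degreeLE_mono (by omega) h_ι_mul))
    have h_step : cprod (B ^ (j + 1 + 1)) (ι Q v) -
        (((j + 1 : ℕ) + 1 : K) * μ) • (ι Q v * B ^ (j + 1)) =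
        (cprod (B ^ (j + 1)) (ι Q v) - ((j + 1 : K) * μ) • (ι Q v * B ^ j)) * B +
          (2 * μ) • cprod (B ^ (j + 1)) (ι Q v) := by
      rw [pow_succ B (j + 1), cprod_mul_left, hv.2, mul_smul_comm, mul_eq_mul_add_two_smul_cprod _
        (ι Q v), sub_mul, smul_mul_assoc, mul_assoc (ι Q v), ← pow_succ]
      push_cast
      module
    rw [h_step]
    exact add_mem (mul_mem_degreeLE ih hB) (Submodule.smul_mem _ _ h_cprod)

end TwoNeZero

variable [CharZero K]

/-- The linear identification of the Clifford algebra with the exterior algebra through which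
`gradeProj` is defined. -/
def toExterior (Q : QuadraticForm K M) : CliffordAlgebra Q ≃ₗ[K] ExteriorAlgebra K M :=
  letI : Invertible (2 : K) := invertibleOfNonzero two_ne_zero
  equivExterior Q

theorem toExterior_algebraMap (r : K) :
    toExterior Q (algebraMap K _ r) = algebraMap K _ r :=
  let : Invertible (2 : K) := invertibleOfNonzero two_ne_zero
  changeForm_algebraMap changeForm.associated_neg_proof r

theorem toExterior_contractLeft (d : Module.Dual K M) (x : CliffordAlgebra Q) :
    toExterior Q (contractLeft d x) = contractLeft (Q := 0) d (toExterior Q x) :=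
  let : Invertible (2 : K) := invertibleOfNonzero two_ne_zero
  changeForm_contractLeft changeForm.associated_neg_proof d x

theorem toExterior_ι_mul (v : M) (x : CliffordAlgebra Q) :
    toExterior Q (ι Q v * x) = ExteriorAlgebra.ι K v * toExterior Q x +
      contractLeft (Q := 0) (vdotDual Q v) (toExterior Q x) := by
  let : Invertible (2 : K) := invertibleOfNonzero two_ne_zero
  have h_dual : vdotDual Q v = -QuadraticMap.associated (R := K) (-Q) v := by
    ext w
    simp [vdotDual, QuadraticMap.associated_apply, QuadraticMap.polar]
  rw [h_dual, map_neg, LinearMap.neg_apply, ← sub_eq_add_neg]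
  exact changeForm_ι_mul changeForm.associated_neg_proof v x

theorem toExterior_gradeProj (l : ℕ) (x : CliffordAlgebra Q) :
    toExterior Q (gradeProj Q l x) = exteriorProj K M l (toExterior Q x) :=
  LinearEquiv.apply_symm_apply _ _

theorem isLinearMap_gradeProj (Q : QuadraticForm K M) (l : ℕ) : IsLinearMap K (gradeProj Q l) :=
  ((toExterior Q).symm.toLinearMap ∘ₗ exteriorProj K M l ∘ₗ (toExterior Q).toLinearMap).isLinear

theorem gradeProj_algebraMap (l : ℕ) (r : K) :
    gradeProj Q l (algebraMap K _ r) = if l = 0 then algebraMap K _ r else 0 := by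
  apply (toExterior Q).injective
  rw [toExterior_gradeProj, toExterior_algebraMap, exteriorProj_algebraMap,
    apply_ite (toExterior Q), toExterior_algebraMap, map_zero]

theorem gradeProj_contractLeft (l : ℕ) (d : Module.Dual K M) (x : CliffordAlgebra Q) :
    gradeProj Q l (contractLeft d x) = contractLeft d (gradeProj Q (l + 1) x) := by
  apply (toExterior Q).injective
  rw [toExterior_gradeProj, toExterior_contractLeft, exteriorProj_contractLeft,
    toExterior_contractLeft, toExterior_gradeProj]

theorem contractLeft_gradeProj_zero (d : Module.Dual K M) (x : CliffordAlgebra Q) :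
    contractLeft d (gradeProj Q 0 x) = 0 := by
  apply (toExterior Q).injective
  rw [toExterior_contractLeft, toExterior_gradeProj, contractLeft_exteriorProj_zero, map_zero]

theorem gradeProj_zero_ι_mul (v : M) (x : CliffordAlgebra Q) :
    gradeProj Q 0 (ι Q v * x) = contractLeft (vdotDual Q v) (gradeProj Q 1 x) := by
  apply (toExterior Q).injective
  rw [toExterior_gradeProj, toExterior_ι_mul, map_add, exteriorProj_zero_ι_mul, zero_add,
    exteriorProj_contractLeft, toExterior_contractLeft, toExterior_gradeProj]

theorem gradeProj_succ_ι_mul (l : ℕ) (v : M) (x : CliffordAlgebra Q) :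
    gradeProj Q (l + 1) (ι Q v * x) =
      ι Q v * gradeProj Q l x - contractLeft (vdotDual Q v) (gradeProj Q l x) +
        contractLeft (vdotDual Q v) (gradeProj Q (l + 2) x) := by
  apply (toExterior Q).injective
  rw [toExterior_gradeProj, toExterior_ι_mul, map_add, exteriorProj_succ_ι_mul,
    exteriorProj_contractLeft, map_add, map_sub, toExterior_ι_mul, toExterior_contractLeft,
    toExterior_contractLeft, toExterior_gradeProj, toExterior_gradeProj, add_sub_cancel_right]

theorem involute_gradeProj (l : ℕ) (x : CliffordAlgebra Q) :
    involute (gradeProj Q l x) = (-1 : K) ^ l • gradeProj Q l x := by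
  induction x using CliffordAlgebra.left_induction generalizing l with
  | algebraMap r =>
    rw [gradeProj_algebraMap]
    split_ifs with hl <;> simp [hl]
  | add x y hx hy => rw [(isLinearMap_gradeProj Q l).map_add, map_add, hx, hy, smul_add]
  | ι_mul x v hx =>
    cases l with
    | zero =>
      rw [gradeProj_zero_ι_mul, involute_contractLeft, hx, map_smul]
      module
    | succ l =>
      rw [gradeProj_succ_ι_mul, map_add, map_sub, map_mul, involute_contractLeft,
        involute_contractLeft, hx, hx, involute_ι, map_smul, map_smul, mul_smul_comm, neg_mul]
      module

theorem gradeProj_eq_zero_of_mem_degreeLE {n l : ℕ} {x : CliffordAlgebra Q}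
    (hx : x ∈ degreeLE Q n) (hl : n < l) : gradeProj Q l x = 0 := by
  induction hx using Submodule.pow_induction_on_left' generalizing l with
  | algebraMap r => rw [gradeProj_algebraMap, if_neg hl.ne']
  | add x y n _ _ hx hy => rw [(isLinearMap_gradeProj Q l).map_add, hx hl, hy hl, add_zero]
  | mem_mul m hm n x _ hx =>
    obtain ⟨_, hr, _, ⟨v, rfl⟩, rfl⟩ := Submodule.mem_sup.1 hm
    obtain ⟨r, rfl⟩ := Submodule.mem_one.1 hr
    obtain ⟨l, rfl⟩ := Nat.exists_eq_add_one_of_ne_zero (Nat.ne_zero_of_lt hl)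
    rw [add_mul, ← Algebra.smul_def, (isLinearMap_gradeProj Q _).map_add,
      (isLinearMap_gradeProj Q _).map_smul, gradeProj_succ_ι_mul,
      hx (l := l) (by omega), hx (by omega), hx (by omega)]
    simp

theorem gradeProj_one_ι (v : M) : gradeProj Q 1 (ι Q v) = ι Q v := by
  have h_grade := gradeProj_succ_ι_mul 0 v (algebraMap K (CliffordAlgebra Q) 1)
  rw [gradeProj_algebraMap, gradeProj_algebraMap] at h_grade
  simpa using h_grade

theorem gradeProj_two_ι_mul_ι (u w : M) :
    gradeProj Q 2 (ι Q u * ι Q w) = ι Q u * ι Q w - algebraMap K _ (vdot Q u w) := by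
  have h_three : gradeProj Q 3 (ι Q w) = 0 :=
    gradeProj_eq_zero_of_mem_degreeLE (ι_mem_degreeLE w) (by norm_num)
  rw [gradeProj_succ_ι_mul, gradeProj_one_ι, h_three, contractLeft_ι, vdotDual_apply, map_zero,
    add_zero]

theorem toExterior_symm_mem_degreeLE {n : ℕ} {y : ExteriorAlgebra K M} (hy : y ∈ ⋀[K]^n M) :
    (toExterior Q).symm y ∈ degreeLE Q n := by
  rw [ExteriorAlgebra.exteriorPower] at hy
  induction hy using Submodule.pow_induction_on_left' with
  | algebraMap r =>
    rw [← toExterior_algebraMap (Q := Q) r, LinearEquiv.symm_apply_apply]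
    exact algebraMap_mem_degreeLE 0 r
  | add x y n _ _ hx hy => rw [map_add]; exact add_mem hx hy
  | mem_mul m hm n y _ hy =>
    obtain ⟨v, rfl⟩ := hm
    have h_symm : (toExterior Q).symm (ExteriorAlgebra.ι K v * y) =
        ι Q v * (toExterior Q).symm y -
          contractLeft (vdotDual Q v) ((toExterior Q).symm y) := by
      rw [LinearEquiv.symm_apply_eq, map_sub, toExterior_ι_mul, toExterior_contractLeft,
        LinearEquiv.apply_symm_apply, add_sub_cancel_right]
    rw [h_symm, Nat.succ_eq_add_one, add_comm n 1]
    exact sub_mem (mul_mem_degreeLE (ι_mem_degreeLE v) hy)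
      (degreeLE_mono (n.le_add_left 1) (contractLeft_mem_degreeLE _ hy))

theorem isGrade_gradeProj (Q : QuadraticForm K M) (l : ℕ) (x : CliffordAlgebra Q) :
    IsGrade Q l (gradeProj Q l x) := by
  apply (toExterior Q).injective
  rw [toExterior_gradeProj, toExterior_gradeProj]
  exact DirectSum.decompose_of_mem_same (fun n : ℕ => ⋀[K]^n M) (SetLike.coe_mem _)

namespace IsGrade

variable {l : ℕ} {x : CliffordAlgebra Q}

theorem smul (h : IsGrade Q l x) (r : K) : IsGrade Q l (r • x) := by
  rw [IsGrade, (isLinearMap_gradeProj Q l).map_smul, h]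

theorem contractLeft (h : IsGrade Q l x) (d : Module.Dual K M) :
    IsGrade Q (l - 1) (contractLeft d x) := by
  cases l with
  | zero =>
    have h_zero : CliffordAlgebra.contractLeft d x = 0 := h ▸ contractLeft_gradeProj_zero d x
    rw [h_zero]
    exact (isLinearMap_gradeProj Q _).map_zero
  | succ l => rw [IsGrade, Nat.add_sub_cancel, gradeProj_contractLeft, h]

theorem mem_degreeLE (h : IsGrade Q l x) : x ∈ degreeLE Q l := by
  rw [← (toExterior Q).symm_apply_apply x, ← h, toExterior_gradeProj]
  exact toExterior_symm_mem_degreeLE (SetLike.coe_mem _)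

theorem involute_of_even (h : IsGrade Q l x) (hl : Even l) : involute x = x := by
  rw [← h, involute_gradeProj, hl.neg_one_pow, one_smul]

end IsGrade

theorem isGrade_Wj (Q : QuadraticForm K M) (B : CliffordAlgebra Q) (j : ℕ) :
    IsGrade Q (2 * j) (Wj Q B j) :=
  (isGrade_gradeProj Q _ _).smul _

theorem gradeProj_pow_eq_zero_of_Wj_eq_zero {B : CliffordAlgebra Q} {j : ℕ} (h : Wj Q B j = 0) :
    gradeProj Q (2 * j) (B ^ j) = 0 :=
  (smul_eq_zero.1 h).resolve_left (inv_ne_zero (Nat.cast_ne_zero.2 j.factorial_ne_zero))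

theorem IsEigen.ι_mul_Wj {B : CliffordAlgebra Q} {μ : K} {v : M} (hv : IsEigen Q B μ v)
    (hB : IsGrade Q 2 B) (hμ : μ ≠ 0) {k : ℕ} (hW : Wj Q B (k + 1) = 0) :
    ι Q v * Wj Q B k = contractLeft (vdotDual Q v) (Wj Q B k) := by
  have h_even : involute (B ^ (k + 1)) = B ^ (k + 1) := by
    rw [map_pow, hB.involute_of_even even_two]
  have h_top : gradeProj Q (2 * k + 1 + 1) (B ^ (k + 1)) = 0 :=
    gradeProj_pow_eq_zero_of_Wj_eq_zero hW
  have h_cprod : gradeProj Q (2 * k + 1) (cprod (B ^ (k + 1)) (ι Q v)) = 0 := by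
    rw [cprod_ι_of_involute_eq h_even, (isLinearMap_gradeProj Q _).map_neg,
      gradeProj_contractLeft, h_top, map_zero, neg_zero]
  have h_rem := gradeProj_eq_zero_of_mem_degreeLE
    (hv.cprod_pow_succ_sub_mem_degreeLE hB.mem_degreeLE k) (2 * k).lt_add_one
  have h_wedge : gradeProj Q (2 * k + 1) (ι Q v * B ^ k) = 0 := by
    rw [(isLinearMap_gradeProj Q _).map_sub, h_cprod, zero_sub, neg_eq_zero,
      (isLinearMap_gradeProj Q _).map_smul] at h_rem
    exact (smul_eq_zero.1 h_rem).resolve_left (mul_ne_zero k.cast_add_one_ne_zero hμ)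
  have h_above : gradeProj Q (2 * k + 2) (B ^ k) = 0 :=
    gradeProj_eq_zero_of_mem_degreeLE (pow_mem_degreeLE hB.mem_degreeLE k) (by omega)
  rw [gradeProj_succ_ι_mul, h_above, map_zero, add_zero, sub_eq_zero] at h_wedge
  rw [Wj, mul_smul_comm, map_smul, h_wedge]

section Pairing

/-- The bivector `(u ∧ w)/(u · w)`, which is `β_μ` when `u` and `w` are eigenvectors with
eigenvalues `μ` and `-μ`; junk value `0` when `u · w = 0`. -/
def pairingBivector (Q : QuadraticForm K M) (u w : M) : CliffordAlgebra Q :=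
  (vdot Q u w)⁻¹ • gradeProj Q 2 (ι Q u * ι Q w)

variable {u w : M}

theorem pairingBivector_eq (h : vdot Q u w ≠ 0) :
    pairingBivector Q u w = (vdot Q u w)⁻¹ • (ι Q u * ι Q w) - 1 := by
  rw [pairingBivector, gradeProj_two_ι_mul_ι, smul_sub, Algebra.algebraMap_eq_smul_one,
    inv_smul_smul₀ h]

theorem pairingBivector_swap (u w : M) : pairingBivector Q w u = -pairingBivector Q u w := by
  have h_anticomm := ι_mul_ι_add_swap_eq_vdot (Q := Q) u w
  rw [two_mul, map_add] at h_anticomm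
  rw [pairingBivector, pairingBivector, vdot_comm w u, ← smul_neg, gradeProj_two_ι_mul_ι,
    gradeProj_two_ι_mul_ι, vdot_comm w u, eq_sub_of_add_eq' h_anticomm]
  congr 1
  abel

theorem pairingBivector_mul_ι_left (hu : ι Q u * ι Q u = 0) (h : vdot Q u w ≠ 0) :
    pairingBivector Q u w * ι Q u = ι Q u := by
  rw [pairingBivector_eq h, sub_mul, smul_mul_assoc, mul_assoc,
    eq_sub_of_add_eq' (ι_mul_ι_add_swap_eq_vdot u w), mul_sub, ← mul_assoc, hu, zero_mul, sub_zero,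
    ← Algebra.commutes, ← Algebra.smul_def, smul_smul, mul_left_comm, inv_mul_cancel₀ h,
    mul_one, one_mul]
  module

theorem ι_mul_pairingBivector_left (hu : ι Q u * ι Q u = 0) (h : vdot Q u w ≠ 0) :
    ι Q u * pairingBivector Q u w = -ι Q u := by
  rw [pairingBivector_eq h, mul_sub, mul_smul_comm, ← mul_assoc, hu, zero_mul, smul_zero, mul_one,
    zero_sub]

theorem cprod_pairingBivector_left (hu : ι Q u * ι Q u = 0) (h : vdot Q u w ≠ 0) :
    cprod (pairingBivector Q u w) (ι Q u) = ι Q u := by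
  rw [cprod, pairingBivector_mul_ι_left hu h, ι_mul_pairingBivector_left hu h, sub_neg_eq_add,
    ← two_smul K, inv_smul_smul₀ two_ne_zero]

theorem cprod_pairingBivector_right (hw : ι Q w * ι Q w = 0) (h : vdot Q u w ≠ 0) :
    cprod (pairingBivector Q u w) (ι Q w) = -ι Q w := by
  rw [← neg_neg (pairingBivector Q u w), ← pairingBivector_swap, cprod, neg_mul, mul_neg,
    ← neg_sub', smul_neg, ← cprod, cprod_pairingBivector_left hw (vdot_comm (Q := Q) u w ▸ h)]

theorem pairingBivector_mul_self (hu : ι Q u * ι Q u = 0) (h : vdot Q u w ≠ 0) :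
    pairingBivector Q u w * pairingBivector Q u w = 1 := by
  nth_rw 2 [pairingBivector_eq h]
  rw [mul_sub, mul_smul_comm, ← mul_assoc, pairingBivector_mul_ι_left hu h, mul_one,
    pairingBivector_eq h, sub_sub_cancel]

variable {x : CliffordAlgebra Q}

theorem commute_pairingBivector (h : vdot Q u w ≠ 0) (hu : ι Q u * x = -(x * ι Q u))
    (hw : ι Q w * x = -(x * ι Q w)) : Commute x (pairingBivector Q u w) := by
  have h_comm : Commute x (ι Q u * ι Q w) := by
    rw [Commute, SemiconjBy, mul_assoc (ι Q u) (ι Q w) x, hw, mul_neg, ← mul_assoc (ι Q u) x, hu,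
      neg_mul, neg_neg, mul_assoc]
  rw [pairingBivector_eq h]
  exact (h_comm.smul_right _).sub_right (Commute.one_right x)

theorem pairingBivector_mul_eq_contractLeft (h : vdot Q u w ≠ 0)
    (hu : ι Q u * x = contractLeft (vdotDual Q u) x)
    (hw : ι Q w * x = contractLeft (vdotDual Q w) x) :
    pairingBivector Q u w * x =
      (vdot Q u w)⁻¹ • contractLeft (vdotDual Q u) (contractLeft (vdotDual Q w) x) := by
  have h_contract : contractLeft (vdotDual Q u) (contractLeft (vdotDual Q w) x) =
      ι Q u * ι Q w * x - vdot Q u w • x := by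
    rw [← hw, contractLeft_ι_mul, ← hu, ← mul_assoc, vdotDual_apply,
      eq_sub_of_add_eq (ι_mul_ι_add_swap_eq_vdot u w), sub_mul, ← Algebra.smul_def]
    module
  rw [h_contract, pairingBivector_eq h, sub_mul, one_mul, smul_mul_assoc, smul_sub,
    inv_smul_smul₀ h]

end Pairing

theorem pairing_bireflection_properties_general {B : CliffordAlgebra Q} (hB : IsGrade Q 2 B)
    {k : ℕ} (hW : Wj Q B (k + 1) = 0) {μ : K} (hμ : μ ≠ 0) {u w : M} (hu : IsEigen Q B μ u)
    (hw : IsEigen Q B (-μ) w) (h : vdot Q u w ≠ 0) :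
    pairingBivector Q u w * pairingBivector Q u w = 1 ∧
    cprod (pairingBivector Q u w) (ι Q u) = ι Q u ∧
    cprod (pairingBivector Q u w) (ι Q w) = -ι Q w ∧
    Wj Q B k * pairingBivector Q u w = pairingBivector Q u w * Wj Q B k ∧
    IsGrade Q (2 * k - 2) (Wj Q B k * pairingBivector Q u w) := by
  have hu_null := hu.ι_mul_self hμ
  have hw_null := hw.ι_mul_self (neg_ne_zero.2 hμ)
  have huW := hu.ι_mul_Wj hB hμ hW
  have hwW := hw.ι_mul_Wj hB (neg_ne_zero.2 hμ) hW
  have hW_even := (isGrade_Wj Q B k).involute_of_even (even_two_mul k)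
  have h_comm := commute_pairingBivector h (ι_mul_eq_neg_mul_ι hW_even huW)
    (ι_mul_eq_neg_mul_ι hW_even hwW)
  refine ⟨pairingBivector_mul_self hu_null h, cprod_pairingBivector_left hu_null h,
    cprod_pairingBivector_right hw_null h, h_comm.eq, ?_⟩
  rw [h_comm.eq, pairingBivector_mul_eq_contractLeft h huW hwW]
  exact (((isGrade_Wj Q B k).contractLeft _).contractLeft _).smul _

section BaseChange

variable (A : Type*) [Field A] [CharZero A] [Algebra K A] [Invertible (2 : K)]

theorem gradeProj_ofBaseChangeAux (l : ℕ) (x : CliffordAlgebra Q) :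
    gradeProj (Q.baseChange A) l (ofBaseChangeAux A Q x) =
      ofBaseChangeAux A Q (gradeProj Q l x) := by
  induction x using CliffordAlgebra.left_induction generalizing l with
  | algebraMap r =>
    rw [gradeProj_algebraMap, apply_ite (ofBaseChangeAux A Q), AlgHom.commutes, map_zero,
      IsScalarTower.algebraMap_apply K A, gradeProj_algebraMap]
  | add x y hx hy =>
    rw [map_add, (isLinearMap_gradeProj _ l).map_add, (isLinearMap_gradeProj _ l).map_add, map_add,
      hx, hy]
  | ι_mul x v hx =>
    rw [map_mul, ofBaseChangeAux_ι]
    cases l with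
    | zero => rw [gradeProj_zero_ι_mul, gradeProj_zero_ι_mul, hx, ofBaseChangeAux_contractLeft]
    | succ l =>
      rw [gradeProj_succ_ι_mul, gradeProj_succ_ι_mul, map_add, map_sub, map_mul,
        ofBaseChangeAux_ι, ofBaseChangeAux_contractLeft, ofBaseChangeAux_contractLeft, hx, hx]

theorem IsGrade.baseChange {l : ℕ} {x : CliffordAlgebra Q} (h : IsGrade Q l x) :
    IsGrade (Q.baseChange A) l (ofBaseChange A Q (1 ⊗ₜ x)) := by
  rw [IsGrade, ofBaseChange_one_tmul, gradeProj_ofBaseChangeAux, h]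

theorem Wj_baseChange (B : CliffordAlgebra Q) (j : ℕ) :
    Wj (Q.baseChange A) (ofBaseChange A Q (1 ⊗ₜ B)) j = ofBaseChange A Q (1 ⊗ₜ Wj Q B j) := by
  have h_cast : (j.factorial : A)⁻¹ = algebraMap K A (j.factorial : K)⁻¹ := by
    rw [map_inv₀, map_natCast]
  rw [ofBaseChange_one_tmul, ofBaseChange_one_tmul, Wj, Wj, map_smul, ← map_pow,
    gradeProj_ofBaseChangeAux, h_cast, algebraMap_smul]

end BaseChange

section Complexification

variable {p q r : ℕ}

theorem IsGrade.toC {l : ℕ} {x : CliffordAlgebra (sigQ p q r)} (h : IsGrade (sigQ p q r) l x) :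
    IsGrade (sigQc p q r) l (toC p q r x) :=
  let : Invertible (2 : ℝ) := invertibleOfNonzero two_ne_zero
  h.baseChange ℂ

theorem Wj_toC (B : CliffordAlgebra (sigQ p q r)) (j : ℕ) :
    Wj (sigQc p q r) (toC p q r B) j = toC p q r (Wj (sigQ p q r) B j) :=
  let : Invertible (2 : ℝ) := invertibleOfNonzero two_ne_zero
  Wj_baseChange ℂ B j

theorem toC_zero : toC p q r 0 = 0 :=
  let : Invertible (2 : ℝ) := invertibleOfNonzero two_ne_zero
  (congrArg (ofBaseChange ℂ (sigQ p q r)) (tmul_zero _ 1)).trans (map_zero _)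

end Complexification

end

open CliffordAlgebra TensorProduct in
/-- let `v₊, v₋` be eigenvectors of `B` with eigenvalues `±μ` (`μ ≠ 0`) and
`v₊ · v₋ ≠ 0`, and set `β_μ := (v₊ ∧ v₋)/(v₊ · v₋)`.  Then (i) `β_μ² = 1`;
(ii) `β_μ × v₊ = v₊` and `β_μ × v₋ = -v₋`; (iii) `W_k β_μ = β_μ W_k` and this product is
homogeneous of grade `2k - 2`. -/
theorem pairing_bireflection_properties (p q r : ℕ) (B : CliffordAlgebra (sigQ p q r))
    (hB : IsGrade (sigQ p q r) 2 B) (k : ℕ) (hk : HasEffDim (sigQ p q r) B k)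
    (μ : ℂ) (hμ : μ ≠ 0) (vp vm : ℂ ⊗[ℝ] (Fin (p + q + r) → ℝ))
    (hvp : IsEigen (sigQc p q r) (toC p q r B) μ vp)
    (hvm : IsEigen (sigQc p q r) (toC p q r B) (-μ) vm)
    (hd : vdot (sigQc p q r) vp vm ≠ 0)
    (β : CliffordAlgebra (sigQc p q r))
    (hβ : β = (vdot (sigQc p q r) vp vm)⁻¹ •
      gradeProj (sigQc p q r) 2 (ι (sigQc p q r) vp * ι (sigQc p q r) vm)) :
    β * β = 1 ∧
    cprod β (ι (sigQc p q r) vp) = ι (sigQc p q r) vp ∧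
    cprod β (ι (sigQc p q r) vm) = -ι (sigQc p q r) vm ∧
    Wj (sigQc p q r) (toC p q r B) k * β = β * Wj (sigQc p q r) (toC p q r B) k ∧
    IsGrade (sigQc p q r) (2 * k - 2) (Wj (sigQc p q r) (toC p q r B) k * β) := by
  subst hβ
  have hW : Wj (sigQc p q r) (toC p q r B) (k + 1) = 0 := by
    rw [Wj_toC, hk.2 (k + 1) k.lt_succ_self, toC_zero]
  exact pairing_bireflection_properties_general hB.toC hW hμ hvp hvm hd
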